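/- arXiv:1806.04901 — 2 statements merged into one kernel-verified Lean document; each statement's English description precedes it below -/
import Mathlib

section
/- Let Ω ⊂ ℝ^N, N ≥ 2, be a bounded domain and set R = sup_{x ∈ Ω} H⁰(x). Then for every u ∈ C_c^∞(Ω), ((N−1)/N)^N · ∫_Ω |u(x)|^N / ( H⁰(x)^N (log(R/H⁰(x)))^N ) dx ≤ ∫_Ω |(x/H⁰(x)) · ∇u(x)|^N dx. -/
/-!
Along a ray `r ↦ r • ω` the polar function is `r * H⁰(ω)`, so in polar coordinates both sides of
the inequality split into one-dimensional integrals over `r ∈ (0, ∞)`. With `v r = u (r • ω)` and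
`ρ = R / H⁰(ω)`, and after cancelling the factor `H⁰(ω) ^ (-N)`, it suffices to show
`((N - 1) / N) ^ N * ∫ |v| ^ N / (r * log (ρ / r) ^ N) ≤ ∫ |v'| ^ N * r ^ (N - 1)` (`hardy_ray`).

Put `c = (N - 1) / N`, `L = log (ρ / r)` and `G = c ^ (N - 1) * |v| ^ N / L ^ (N - 1)`.
Young's inequality gives pointwise
`c ^ N * |v| ^ N / (r * L ^ N) ≤ |v'| ^ N * r ^ (N - 1) + G'` (`hardy_pointwise`).
Integrating over `[ε, ρ']`, where `ρ' < ρ` and `v` vanishes from `ρ'` on, the boundary contribution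
`G ρ' - G ε = - G ε` is nonpositive, and `ε → 0` gives the claim.

Such a `ρ'` exists because `H⁰ < R` on the open set `Ω` (`polarNorm_lt_sSup`) and the support of `u`
is compact. The integrals are compared in `[0, ∞]`; the right one is finite since `x / H⁰(x)` is
bounded.
-/

open MeasureTheory Set Filter
open scoped RealInnerProductSpace Topology ENNReal NNReal

noncomputable section

/-- `ℝ^N` as a Euclidean space. -/
abbrev Euc (N : ℕ) := EuclideanSpace ℝ (Fin N)

/-- `H : ℝ^N → ℝ` is a Finsler norm: nonnegative, convex, `C²` away from the origin,
even and positively one-homogeneous, comparable to the Euclidean norm, and with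
positive definite Hessian of `H²` away from the origin. -/
structure IsFinslerNorm {N : ℕ} (H : Euc N → ℝ) : Prop where
  nonneg : ∀ ξ, 0 ≤ H ξ
  convexOn : ConvexOn ℝ Set.univ H
  smooth : ContDiffOn ℝ 2 H {(0 : Euc N)}ᶜ
  homog : ∀ (t : ℝ) (ξ : Euc N), H (t • ξ) = |t| * H ξ
  bounds : ∃ a b : ℝ, 0 < a ∧ a ≤ b ∧ ∀ ξ : Euc N, a * ‖ξ‖ ≤ H ξ ∧ H ξ ≤ b * ‖ξ‖
  hessPosDef : ∀ ξ : Euc N, ξ ≠ 0 → ∀ v : Euc N, v ≠ 0 →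
    0 < iteratedFDeriv ℝ 2 (fun x => (H x) ^ 2) ξ ![v, v]

/-- The polar function `H⁰(x) = sup_{ξ ≠ 0} (ξ·x)/H(ξ)` of a Finsler norm. -/
def polarNorm {N : ℕ} (H : Euc N → ℝ) (x : Euc N) : ℝ :=
  sSup {r : ℝ | ∃ ξ : Euc N, ξ ≠ 0 ∧ r = ⟪ξ, x⟫ / H ξ}

/-- `u ∈ C_c^∞(Ω)`: a smooth function with compact support contained in `Ω`. -/
def IsTestFun {N : ℕ} (Ω : Set (Euc N)) (u : Euc N → ℝ) : Prop :=
  ContDiff ℝ (⊤ : ℕ∞) u ∧ HasCompactSupport u ∧ tsupport u ⊆ Ω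


/-! ### The one-dimensional inequality -/

/-- Young's inequality `N A ^ (N - 1) B ≤ B ^ N + (N - 1) A ^ N` for `N = m + 2`, deduced from
Bernoulli's inequality for `B / A`. -/
lemma young_pow (m : ℕ) {A B : ℝ} (hA : 0 ≤ A) (hB : 0 ≤ B) :
    ((m : ℝ) + 2) * A ^ (m + 1) * B ≤ B ^ (m + 2) + ((m : ℝ) + 1) * A ^ (m + 2) := by
  rcases hA.eq_or_lt with rfl | hA
  · simp; positivity
  have h := one_add_mul_sub_le_pow (a := B / A) (by have := div_nonneg hB hA.le; linarith) (m + 2)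
  have h2 := mul_le_mul_of_nonneg_right h (pow_nonneg hA.le (m + 2))
  rw [div_pow, div_mul_cancel₀ _ (by positivity)] at h2
  have : (1 + ((m + 2 : ℕ) : ℝ) * (B / A - 1)) * A ^ (m + 2)
      = ((m : ℝ) + 2) * A ^ (m + 1) * B - ((m : ℝ) + 1) * A ^ (m + 2) := by
    push_cast
    field_simp
    ring
  linarith

/-- The pointwise inequality behind the one-dimensional Hardy inequality: with `N = m + 2`,
`y = v r`, `w = v' r` and `L = log (ρ / r)`, the last summand is the derivative of the function
in `hardy_primitive`. It is `young_pow` with `A = ((N - 1) / N) |y| / (L r)` and `B = |w|`. -/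
lemma hardy_pointwise (m : ℕ) {r L y w : ℝ} (hr : 0 < r) (hL : 0 < L) :
    (((m : ℝ) + 1) / (m + 2)) ^ (m + 2) * (|y| ^ (m + 2) / (r * L ^ (m + 2)))
      ≤ |w| ^ (m + 2) * r ^ (m + 1) +
        (((m : ℝ) + 1) / (m + 2)) ^ (m + 1) *
          (((m : ℝ) + 2) * |y| ^ m * y * w / L ^ (m + 1)
            + (m + 1) * |y| ^ (m + 2) / (L ^ (m + 2) * r)) := by
  set c : ℝ := ((m : ℝ) + 1) / (m + 2) with hc
  have hc0 : 0 < c := by positivity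
  have hm1 : (m : ℝ) + 1 = c * (m + 2) := by rw [hc]; field_simp
  have hyw : -(|y| * |w|) ≤ y * w := by rw [← abs_mul]; exact neg_abs_le _
  have hY := mul_le_mul_of_nonneg_right
    (young_pow m (A := c * |y| / (L * r)) (B := |w|) (by positivity) (by positivity))
    (pow_nonneg hr.le (m + 1))
  have e1 : ((m : ℝ) + 2) * (c * |y| / (L * r)) ^ (m + 1) * |w| * r ^ (m + 1)
      = c ^ (m + 1) * (((m : ℝ) + 2) * |y| ^ m / L ^ (m + 1)) * (|y| * |w|) := by
    rw [div_pow, mul_pow, mul_pow]; field_simp; ring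
  have e2 : (c * |y| / (L * r)) ^ (m + 2) * r ^ (m + 1)
      = c ^ (m + 2) * (|y| ^ (m + 2) / (r * L ^ (m + 2))) := by
    rw [div_pow, mul_pow, mul_pow]; field_simp; ring
  have e3 : c ^ (m + 1) *
          (((m : ℝ) + 2) * |y| ^ m * y * w / L ^ (m + 1)
            + (m + 1) * |y| ^ (m + 2) / (L ^ (m + 2) * r))
      = c ^ (m + 1) * (((m : ℝ) + 2) * |y| ^ m / L ^ (m + 1)) * (y * w)
        + ((m : ℝ) + 2) * (c ^ (m + 2) * (|y| ^ (m + 2) / (r * L ^ (m + 2)))) := by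
    rw [hm1]; field_simp; ring
  have h4 := mul_le_mul_of_nonneg_left hyw
    (show 0 ≤ c ^ (m + 1) * (((m : ℝ) + 2) * |y| ^ m / L ^ (m + 1)) by positivity)
  rw [e1, add_mul (|w| ^ (m + 2)), mul_assoc ((m : ℝ) + 1), e2] at hY
  rw [e3]
  linarith

lemma hasDerivAt_abs_pow (m : ℕ) (x : ℝ) :
    HasDerivAt (fun x : ℝ => |x| ^ (m + 2)) (((m : ℝ) + 2) * |x| ^ m * x) x := by
  have h := hasDerivAt_abs_rpow x (p := ((m + 2 : ℕ) : ℝ))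
    (by push_cast; linarith [m.cast_nonneg (α := ℝ)])
  have e : (((m + 2 : ℕ) : ℝ) - 2) = (m : ℕ) := by push_cast; ring
  rw [e] at h
  simp only [Real.rpow_natCast] at h
  simpa using h

lemma hardy_primitive (m : ℕ) (ρ : ℝ) {v v' : ℝ → ℝ} {r : ℝ}
    (hv : HasDerivAt v (v' r) r) (hr : 0 < r) (hρ : r < ρ) :
    HasDerivAt (fun r => (((m : ℝ) + 1) / (m + 2)) ^ (m + 1) *
        (|v r| ^ (m + 2) / Real.log (ρ / r) ^ (m + 1)))
      ((((m : ℝ) + 1) / (m + 2)) ^ (m + 1) *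
          (((m : ℝ) + 2) * |v r| ^ m * v r * v' r / Real.log (ρ / r) ^ (m + 1)
            + (m + 1) * |v r| ^ (m + 2) / (Real.log (ρ / r) ^ (m + 2) * r))) r := by
  have hL : 0 < Real.log (ρ / r) := Real.log_pos (by rwa [one_lt_div hr])
  have h1 := (hasDerivAt_abs_pow m (v r)).comp r hv
  have h2 : HasDerivAt (fun r => Real.log (ρ / r)) (-r⁻¹) r := by
    have hρ0 : ρ ≠ 0 := by linarith
    have h := ((hasDerivAt_const r ρ).div (hasDerivAt_id' r) hr.ne').log
      (div_ne_zero hρ0 hr.ne')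
    refine h.congr_deriv ?_
    simp only [Pi.div_apply]
    field_simp
    ring
  have h3 := h2.pow (m + 1)
  refine ((h1.div h3 (pow_ne_zero _ hL.ne')).const_mul _).congr_deriv ?_
  simp only [Function.comp, Nat.add_sub_cancel, Pi.pow_apply]
  congr 1
  push_cast
  field_simp
  ring

/-- Integration of `hardy_pointwise` over `[ε, ρ']`: the primitive vanishes at `ρ'` and is
nonnegative at `ε`, so the boundary terms can be dropped. -/
lemma hardy_interval (m : ℕ) {ρ ρ' ε : ℝ} (hε : 0 < ε) (hερ : ε ≤ ρ') (hρ : ρ' < ρ)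
    {v v' : ℝ → ℝ} (hv : ∀ r, HasDerivAt v (v' r) r) (hv' : Continuous v')
    (h0 : v ρ' = 0) :
    ∫ r in ε..ρ', (((m : ℝ) + 1) / (m + 2)) ^ (m + 2) *
        (|v r| ^ (m + 2) / (r * Real.log (ρ / r) ^ (m + 2)))
      ≤ ∫ r in ε..ρ', |v' r| ^ (m + 2) * r ^ (m + 1) := by
  have hvc : Continuous v := continuous_iff_continuousAt.2 fun r => (hv r).continuousAt
  have hpos : ∀ r ∈ Icc ε ρ', 0 < r ∧ r < ρ ∧ 0 < Real.log (ρ / r) := by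
    intro r hr
    have h0 : 0 < r := hε.trans_le hr.1
    have h1 : r < ρ := hr.2.trans_lt hρ
    exact ⟨h0, h1, Real.log_pos (by rwa [one_lt_div h0])⟩
  have hlog : ContinuousOn (fun r => Real.log (ρ / r)) (Icc ε ρ') := by
    refine ContinuousOn.log (continuousOn_const.div continuousOn_id fun r hr => (hpos r hr).1.ne') ?_
    intro r hr
    have := hpos r hr
    exact div_ne_zero (by linarith) (by linarith)
  set G' : ℝ → ℝ := fun r => (((m : ℝ) + 1) / (m + 2)) ^ (m + 1) *
          (((m : ℝ) + 2) * |v r| ^ m * v r * v' r / Real.log (ρ / r) ^ (m + 1)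
            + (m + 1) * |v r| ^ (m + 2) / (Real.log (ρ / r) ^ (m + 2) * r)) with hG'
  have hG'c : ContinuousOn G' (Icc ε ρ') := by
    refine continuousOn_const.mul (ContinuousOn.add (ContinuousOn.div ?_ (hlog.pow _) ?_)
      (ContinuousOn.div ?_ ((hlog.pow _).mul continuousOn_id) ?_))
    · exact Continuous.continuousOn (by fun_prop)
    · intro r hr; exact pow_ne_zero _ (hpos r hr).2.2.ne'
    · exact Continuous.continuousOn (by fun_prop)
    · intro r hr; exact mul_ne_zero (pow_ne_zero _ (hpos r hr).2.2.ne') (hpos r hr).1.ne'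
  have hFc : ContinuousOn (fun r => (((m : ℝ) + 1) / (m + 2)) ^ (m + 2) *
        (|v r| ^ (m + 2) / (r * Real.log (ρ / r) ^ (m + 2)))) (Icc ε ρ') := by
    refine continuousOn_const.mul (ContinuousOn.div ?_ (continuousOn_id.mul (hlog.pow _)) ?_)
    · exact Continuous.continuousOn (by fun_prop)
    · intro r hr; exact mul_ne_zero (hpos r hr).1.ne' (pow_ne_zero _ (hpos r hr).2.2.ne')
  have hBc : Continuous (fun r => |v' r| ^ (m + 2) * r ^ (m + 1)) := by fun_prop
  have hG'i : IntervalIntegrable G' volume ε ρ' := hG'c.intervalIntegrable_of_Icc hερ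
  have hint := intervalIntegral.integral_eq_sub_of_hasDerivAt (a := ε) (b := ρ')
    (f := fun r => (((m : ℝ) + 1) / (m + 2)) ^ (m + 1) *
        (|v r| ^ (m + 2) / Real.log (ρ / r) ^ (m + 1))) (f' := G')
    (fun r hr => by
      rw [uIcc_of_le hερ] at hr
      exact hardy_primitive m ρ (hv r) (hpos r hr).1 (hpos r hr).2.1) hG'i
  have hmono := intervalIntegral.integral_mono_on hερ (hFc.intervalIntegrable_of_Icc hερ)
    ((hBc.intervalIntegrable ε ρ').add hG'i)
    (fun r hr => hardy_pointwise m (y := v r) (w := v' r) (hpos r hr).1 (hpos r hr).2.2)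
  rw [intervalIntegral.integral_add (hBc.intervalIntegrable ε ρ') hG'i, hint] at hmono
  have hGε : 0 ≤ (((m : ℝ) + 1) / (m + 2)) ^ (m + 1) *
        (|v ε| ^ (m + 2) / Real.log (ρ / ε) ^ (m + 1)) := by
    have := (hpos ε ⟨le_rfl, hερ⟩).2.2
    positivity
  simp only [h0] at hmono
  simp only [abs_zero, ne_eq, Nat.add_eq_zero_iff, OfNat.ofNat_ne_zero, and_false, not_false_eq_true,
    zero_pow, zero_div, mul_zero, zero_sub] at hmono
  linarith

/-- The weighted Hardy inequality on a ray, obtained from `hardy_interval` by exhausting `(0, ρ']`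
with the intervals `(ρ' / (n + 1), ρ']`. -/
lemma hardy_ray (m : ℕ) {ρ ρ' : ℝ} (hρ0 : 0 < ρ') (hρ : ρ' < ρ)
    {v v' : ℝ → ℝ} (hv : ∀ r, HasDerivAt v (v' r) r) (hv' : Continuous v')
    (h0 : ∀ r, ρ' ≤ r → v r = 0) :
    ∫⁻ r in Ioi 0, ENNReal.ofReal ((((m : ℝ) + 1) / (m + 2)) ^ (m + 2) *
        (|v r| ^ (m + 2) / (r * Real.log (ρ / r) ^ (m + 2))))
      ≤ ∫⁻ r in Ioi 0, ENNReal.ofReal (|v' r| ^ (m + 2) * r ^ (m + 1)) := by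
  have hvc : Continuous v := continuous_iff_continuousAt.2 fun r => (hv r).continuousAt
  set F : ℝ → ℝ := fun r => (((m : ℝ) + 1) / (m + 2)) ^ (m + 2) *
        (|v r| ^ (m + 2) / (r * Real.log (ρ / r) ^ (m + 2))) with hF
  have hUn : (⋃ n : ℕ, Ioc (ρ' / (n + 1)) ρ') = Ioc 0 ρ' := by
    ext r
    simp only [mem_iUnion, mem_Ioc]
    constructor
    · rintro ⟨n, h1, h2⟩
      exact ⟨lt_trans (by positivity) h1, h2⟩
    · rintro ⟨h1, h2⟩
      obtain ⟨n, hn⟩ := exists_nat_gt (ρ' / r)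
      refine ⟨n, ?_, h2⟩
      rw [div_lt_iff₀ h1] at hn
      rw [div_lt_iff₀ (by positivity)]
      nlinarith
  have hdir : Directed (· ⊆ ·) (fun n : ℕ => Ioc (ρ' / (n + 1)) ρ') := by
    refine Monotone.directed_le (fun a b hab => Ioc_subset_Ioc_left ?_)
    have : (a : ℝ) ≤ b := by exact_mod_cast hab
    gcongr
  have hsplit : ∫⁻ r in Ioi 0, ENNReal.ofReal (F r) = ∫⁻ r in Ioc 0 ρ', ENNReal.ofReal (F r) := by
    rw [← Ioc_union_Ioi_eq_Ioi hρ0.le, lintegral_union measurableSet_Ioi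
      (Ioc_disjoint_Ioi le_rfl), setLIntegral_eq_zero measurableSet_Ioi, add_zero]
    intro r hr
    simp [hF, h0 r (le_of_lt hr)]
  rw [hsplit, ← hUn, setLIntegral_iUnion_of_directed _ hdir]
  refine iSup_le fun n => ?_
  set ε : ℝ := ρ' / (n + 1) with hεdef
  have hε : 0 < ε := by positivity
  have hερ : ε ≤ ρ' := div_le_self hρ0.le (by linarith [n.cast_nonneg (α := ℝ)])
  have hBc : Continuous (fun r => |v' r| ^ (m + 2) * r ^ (m + 1)) := by fun_prop
  have key := hardy_interval m hε hερ hρ hv hv' (h0 _ le_rfl)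
  rw [intervalIntegral.integral_of_le hερ, intervalIntegral.integral_of_le hερ] at key
  have hnn : ∀ r ∈ Icc ε ρ', 0 < r ∧ 0 < Real.log (ρ / r) := by
    intro r hr
    have h0 : 0 < r := hε.trans_le hr.1
    exact ⟨h0, Real.log_pos (by rw [one_lt_div h0]; exact hr.2.trans_lt hρ)⟩
  have hFi : IntegrableOn F (Ioc ε ρ') := by
    refine (ContinuousOn.integrableOn_Icc ?_).mono_set Ioc_subset_Icc_self
    refine continuousOn_const.mul (ContinuousOn.div ?_ (continuousOn_id.mul
      (ContinuousOn.pow (ContinuousOn.log (continuousOn_const.div continuousOn_id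
        fun r hr => (hnn r hr).1.ne') ?_) _)) ?_)
    · exact Continuous.continuousOn (by fun_prop)
    · intro r hr; exact div_ne_zero (by linarith) (hnn r hr).1.ne'
    · intro r hr; exact mul_ne_zero (hnn r hr).1.ne' (pow_ne_zero _ (hnn r hr).2.ne')
  have hBi : IntegrableOn (fun r => |v' r| ^ (m + 2) * r ^ (m + 1)) (Ioc ε ρ') :=
    (hBc.continuousOn.integrableOn_Icc).mono_set Ioc_subset_Icc_self
  rw [← ofReal_integral_eq_lintegral_ofReal hFi]
  · refine (ENNReal.ofReal_le_ofReal key).trans ?_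
    rw [ofReal_integral_eq_lintegral_ofReal hBi]
    · exact lintegral_mono_set (fun r hr => hε.trans hr.1)
    · filter_upwards [ae_restrict_mem measurableSet_Ioc] with r hr
      have := hε.trans hr.1
      simp only [Pi.zero_apply]; positivity
  · filter_upwards [ae_restrict_mem measurableSet_Ioc] with r hr
    have := hnn r (Ioc_subset_Icc_self hr)
    have h1 := this.1
    have h2 := this.2
    simp only [Pi.zero_apply, hF]; positivity

/-! ### Polar coordinates -/

/-- Integration in polar coordinates over the Euclidean unit sphere. -/
lemma lintegral_polar {E : Type*} [NormedAddCommGroup E] [NormedSpace ℝ E] [FiniteDimensional ℝ E]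
    [Nontrivial E] [MeasurableSpace E] [BorelSpace E] (μ : Measure E) [μ.IsAddHaarMeasure]
    (f : E → ℝ≥0∞) (hf : Measurable f) :
    ∫⁻ x, f x ∂μ = ∫⁻ ω : Metric.sphere (0 : E) 1, (∫⁻ r in Ioi (0 : ℝ),
      ENNReal.ofReal (r ^ (Module.finrank ℝ E - 1)) * f (r • (ω : E))) ∂μ.toSphere := by
  have hm : Measurable fun p : Metric.sphere (0 : E) 1 × Ioi (0 : ℝ) =>
      f ((p.2 : ℝ) • (p.1 : E)) := by
    refine hf.comp (Continuous.measurable ?_)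
    fun_prop
  calc ∫⁻ x, f x ∂μ = ∫⁻ x : ({(0)}ᶜ : Set E), f x ∂(μ.comap (↑)) := by
        rw [lintegral_subtype_comap (measurableSet_singleton _).compl,
          restrict_compl_singleton]
    _ = ∫⁻ p, f ((p.2 : ℝ) • (p.1 : E))
          ∂μ.toSphere.prod (.volumeIoiPow (Module.finrank ℝ E - 1)) := by
        rw [← μ.measurePreserving_homeomorphUnitSphereProd.lintegral_comp hm]
        refine lintegral_congr fun x => ?_
        congr 1
        exact (congrArg Subtype.val ((homeomorphUnitSphereProd E).symm_apply_apply x)).symm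
    _ = _ := by
        rw [lintegral_prod _ hm.aemeasurable]
        refine lintegral_congr fun ω => ?_
        rw [Measure.volumeIoiPow, lintegral_withDensity_eq_lintegral_mul _ (by fun_prop)
          (by refine hf.comp (Continuous.measurable ?_); fun_prop)]
        exact lintegral_subtype_comap measurableSet_Ioi
          (fun r => ENNReal.ofReal (r ^ (Module.finrank ℝ E - 1)) * f (r • (ω : E)))

/-! ### The polar function -/

lemma polarNorm_term_le {N : ℕ} {H : Euc N → ℝ} {a : ℝ} (ha : 0 < a)
    (hHa : ∀ ξ, a * ‖ξ‖ ≤ H ξ) (x ξ : Euc N) (hξ : ξ ≠ 0) :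
    ⟪ξ, x⟫ / H ξ ≤ a⁻¹ * ‖x‖ := by
  have h0 : 0 < ‖ξ‖ := norm_pos_iff.2 hξ
  have h1 : 0 < H ξ := (mul_pos ha h0).trans_le (hHa ξ)
  rw [div_le_iff₀ h1]
  calc ⟪ξ, x⟫ ≤ ‖ξ‖ * ‖x‖ := real_inner_le_norm _ _
    _ = a⁻¹ * ‖x‖ * (a * ‖ξ‖) := by field_simp
    _ ≤ _ := by gcongr; exact hHa ξ

lemma polarNorm_bddAbove {N : ℕ} {H : Euc N → ℝ} {a : ℝ} (ha : 0 < a)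
    (hHa : ∀ ξ, a * ‖ξ‖ ≤ H ξ) (x : Euc N) :
    BddAbove {r : ℝ | ∃ ξ : Euc N, ξ ≠ 0 ∧ r = ⟪ξ, x⟫ / H ξ} := by
  refine ⟨a⁻¹ * ‖x‖, ?_⟩
  rintro _ ⟨ξ, hξ, rfl⟩
  exact polarNorm_term_le ha hHa x ξ hξ

/-- The polar function is Lipschitz with constant `a⁻¹`. -/
lemma polarNorm_le_add {N : ℕ} [Nontrivial (Euc N)] {H : Euc N → ℝ} {a : ℝ} (ha : 0 < a)
    (hHa : ∀ ξ, a * ‖ξ‖ ≤ H ξ) (x y : Euc N) :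
    polarNorm H x ≤ polarNorm H y + a⁻¹ * dist x y := by
  obtain ⟨ξ₀, hξ₀⟩ := exists_ne (0 : Euc N)
  refine csSup_le ⟨_, ξ₀, hξ₀, rfl⟩ ?_
  rintro _ ⟨ξ, hξ, rfl⟩
  have h1 : ⟪ξ, y⟫ / H ξ ≤ polarNorm H y := le_csSup (polarNorm_bddAbove ha hHa y) ⟨ξ, hξ, rfl⟩
  have h2 := polarNorm_term_le ha hHa (x - y) ξ hξ
  rw [inner_sub_right, sub_div, ← dist_eq_norm] at h2
  linarith

lemma polarNorm_smul {N : ℕ} (H : Euc N → ℝ) {t : ℝ} (ht : 0 ≤ t) (x : Euc N) :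
    polarNorm H (t • x) = t * polarNorm H x := by
  unfold polarNorm
  rw [← smul_eq_mul, ← Real.sSup_smul_of_nonneg ht]
  congr 1
  ext r
  simp only [mem_ofPred_eq, mem_smul_set, smul_eq_mul]
  constructor
  · rintro ⟨ξ, hξ, rfl⟩
    exact ⟨_, ⟨ξ, hξ, rfl⟩, by rw [real_inner_smul_right, mul_div_assoc]⟩
  · rintro ⟨_, ⟨ξ, hξ, rfl⟩, rfl⟩
    exact ⟨ξ, hξ, by rw [real_inner_smul_right, mul_div_assoc]⟩

lemma polarNorm_pos {N : ℕ} {H : Euc N → ℝ} {a : ℝ} (ha : 0 < a)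
    (hHa : ∀ ξ, a * ‖ξ‖ ≤ H ξ) {x : Euc N} (hx : x ≠ 0) : 0 < polarNorm H x := by
  have h0 : 0 < ‖x‖ := norm_pos_iff.2 hx
  have h1 : 0 < H x := (mul_pos ha h0).trans_le (hHa x)
  have h2 : ⟪x, x⟫ / H x ≤ polarNorm H x := le_csSup (polarNorm_bddAbove ha hHa x) ⟨x, hx, rfl⟩
  refine lt_of_lt_of_le ?_ h2
  rw [real_inner_self_eq_norm_sq]
  positivity

/-- The supremum of the polar function over an open set is not attained, so the logarithm in the
Hardy weight is positive on all of `Ω`. -/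
lemma polarNorm_lt_sSup {N : ℕ} {H : Euc N → ℝ} [Nontrivial (Euc N)] {a : ℝ} (ha : 0 < a)
    (hHa : ∀ ξ, a * ‖ξ‖ ≤ H ξ) {Ω : Set (Euc N)} (hΩ : IsOpen Ω)
    (hbdd : BddAbove (polarNorm H '' Ω)) {x : Euc N} (hx : x ∈ Ω) :
    polarNorm H x < sSup (polarNorm H '' Ω) := by
  suffices h : ∃ y ∈ Ω, polarNorm H x < polarNorm H y by
    obtain ⟨y, hy, hxy⟩ := h
    exact hxy.trans_le (le_csSup hbdd ⟨y, hy, rfl⟩)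
  -- the polar function strictly increases from `x` in the direction `x`,
  -- or in any direction when `x = 0`
  obtain ⟨z, hz⟩ : ∃ z : Euc N, z ≠ 0 ∧ (x = 0 ∨ z = x) := by
    by_cases h : x = 0
    · obtain ⟨z, hz⟩ := exists_ne (0 : Euc N)
      exact ⟨z, hz, Or.inl h⟩
    · exact ⟨x, h, Or.inr rfl⟩
  have hc : Continuous fun t : ℝ => x + t • z := by fun_prop
  have hmem : ∀ᶠ t : ℝ in 𝓝[>] 0, x + t • z ∈ Ω := by
    refine nhdsWithin_le_nhds (hc.continuousAt.eventually_mem ?_)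
    simpa using hΩ.mem_nhds hx
  obtain ⟨t, ht, ht0⟩ := (hmem.and self_mem_nhdsWithin).exists
  have ht0 : 0 < t := ht0
  refine ⟨_, ht, ?_⟩
  have hpz := polarNorm_pos ha hHa hz.1
  rcases hz.2 with rfl | rfl
  · have h0 : polarNorm H (0 : Euc N) = 0 := by
      simpa using polarNorm_smul H le_rfl (0 : Euc N)
    rw [zero_add, polarNorm_smul H ht0.le, h0]
    positivity
  · have : z + t • z = (1 + t) • z := by rw [add_smul, one_smul]
    rw [this, polarNorm_smul H (by positivity)]
    nlinarith

/-! ### Integration over the rays -/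

/-- The Hardy inequality for extended nonnegative integrals, with an arbitrary measurable gauge `p`
that is positive off the origin and positively one-homogeneous. On the ray through `ω` both sides
equal `p ω ^ (-N)` times the corresponding side of `hardy_ray` with `ρ = R / p ω`. -/
lemma hardy_lintegral (m : ℕ) {p : Euc (m + 2) → ℝ} (hpc : Measurable p)
    (hp0 : ∀ x, x ≠ 0 → 0 < p x) (hps : ∀ t : ℝ, 0 ≤ t → ∀ x, p (t • x) = t * p x)
    {u : Euc (m + 2) → ℝ} (hu : ContDiff ℝ 1 u) {M R : ℝ} (hM0 : 0 < M) (hMR : M < R)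
    (hM : ∀ x, u x ≠ 0 → p x < M) :
    ∫⁻ x, ENNReal.ofReal ((((m : ℝ) + 1) / (m + 2)) ^ (m + 2) *
        (|u x| ^ (m + 2) / (p x ^ (m + 2) * Real.log (R / p x) ^ (m + 2))))
      ≤ ∫⁻ x, ENNReal.ofReal (|fderiv ℝ u x ((p x)⁻¹ • x)| ^ (m + 2)) := by
  have hum : Measurable u := hu.continuous.measurable
  have hdc : Continuous (fderiv ℝ u) := hu.continuous_fderiv (by norm_num)
  have hgm : Measurable fun x => fderiv ℝ u x ((p x)⁻¹ • x) := by
    have h1 : Measurable fun x => (p x)⁻¹ * fderiv ℝ u x x :=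
      hpc.inv.mul (hdc.clm_apply continuous_id).measurable
    simpa using h1
  rw [lintegral_polar volume _ (by fun_prop), lintegral_polar volume _ (by fun_prop)]
  refine lintegral_mono fun ω => ?_
  have hω : (ω : Euc (m + 2)) ≠ 0 := ne_zero_of_mem_unit_sphere ω
  set h : ℝ := p ω with hh
  have hh0 : 0 < h := hp0 _ hω
  have hray := hardy_ray m (ρ := R / h) (ρ' := M / h) (by positivity) (by gcongr)
    (v := fun r => u (r • (ω : Euc (m + 2)))) (v' := fun r => fderiv ℝ u (r • (ω : Euc (m + 2))) ω)
    (fun r => by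
      have h1 : HasDerivAt (fun r : ℝ => r • (ω : Euc (m + 2))) (ω : Euc (m + 2)) r := by
        simpa using (hasDerivAt_id r).smul_const (ω : Euc (m + 2))
      exact ((hu.differentiable (by norm_num) _).hasFDerivAt).comp_hasDerivAt r h1)
    (by fun_prop)
    (fun r hr => by
      by_contra hne
      have hr0 : 0 < r := lt_of_lt_of_le (by positivity) hr
      have := hM _ hne
      rw [hps r hr0.le] at this
      rw [div_le_iff₀ hh0] at hr
      linarith)
  have hfin : Module.finrank ℝ (Euc (m + 2)) - 1 = m + 1 := by simp
  rw [hfin]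
  have hK : ENNReal.ofReal ((h ^ (m + 2))⁻¹) ≠ ⊤ := ENNReal.ofReal_ne_top
  have e1 : ∀ r ∈ Ioi (0 : ℝ), ENNReal.ofReal (r ^ (m + 1)) *
      ENNReal.ofReal ((((m : ℝ) + 1) / (m + 2)) ^ (m + 2) *
        (|u (r • (ω : Euc (m + 2)))| ^ (m + 2) / (p (r • (ω : Euc (m + 2))) ^ (m + 2) *
          Real.log (R / p (r • (ω : Euc (m + 2)))) ^ (m + 2))))
      = ENNReal.ofReal ((h ^ (m + 2))⁻¹) * ENNReal.ofReal ((((m : ℝ) + 1) / (m + 2)) ^ (m + 2) *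
        (|u (r • (ω : Euc (m + 2)))| ^ (m + 2) / (r * Real.log (R / h / r) ^ (m + 2)))) := by
    intro r hr
    have hr : 0 < r := hr
    rw [← ENNReal.ofReal_mul (by positivity), ← ENNReal.ofReal_mul (by positivity),
      hps r hr.le, ← hh, div_div, mul_comm r h]
    congr 1
    rw [mul_pow, pow_succ r (m + 1)]
    field_simp
  have e2 : ∀ r ∈ Ioi (0 : ℝ), ENNReal.ofReal (r ^ (m + 1)) *
      ENNReal.ofReal (|fderiv ℝ u (r • (ω : Euc (m + 2)))
        ((p (r • (ω : Euc (m + 2))))⁻¹ • (r • (ω : Euc (m + 2))))| ^ (m + 2))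
      = ENNReal.ofReal ((h ^ (m + 2))⁻¹) *
        ENNReal.ofReal (|fderiv ℝ u (r • (ω : Euc (m + 2))) ω| ^ (m + 2) * r ^ (m + 1)) := by
    intro r hr
    have hr : 0 < r := hr
    rw [← ENNReal.ofReal_mul (by positivity), ← ENNReal.ofReal_mul (by positivity),
      hps r hr.le, ← hh, smul_smul]
    congr 1
    have : (r * h)⁻¹ * r = h⁻¹ := by field_simp
    rw [this, map_smul, smul_eq_mul, abs_mul, abs_of_pos (inv_pos.2 hh0), mul_pow, inv_pow]
    ring
  rw [setLIntegral_congr_fun measurableSet_Ioi e1, setLIntegral_congr_fun measurableSet_Ioi e2,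
    lintegral_const_mul' _ _ hK, lintegral_const_mul' _ _ hK]
  gcongr

/-- Sharp anisotropic critical Hardy inequality (p = N) on a bounded domain,
with R = sup over Ω of H⁰. -/
theorem finsler_hardy_critical
    (N : ℕ) (hN : 2 ≤ N) (H : Euc N → ℝ) (hH : IsFinslerNorm H)
    (Ω : Set (Euc N)) (hΩopen : IsOpen Ω) (hΩconn : IsConnected Ω)
    (hΩbdd : Bornology.IsBounded Ω)
    (u : Euc N → ℝ) (hu : IsTestFun Ω u) :
    (((N : ℝ) - 1) / (N : ℝ)) ^ N *
        ∫ x in Ω, |u x| ^ N /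
          (polarNorm H x ^ N * Real.log (sSup (polarNorm H '' Ω) / polarNorm H x) ^ N)
      ≤ ∫ x in Ω, |⟪(polarNorm H x)⁻¹ • x, gradient u x⟫| ^ N := by
  obtain ⟨m, rfl⟩ : ∃ m, N = m + 2 := ⟨N - 2, by omega⟩
  obtain ⟨a, b, ha, -, hab⟩ := hH.bounds
  have hHa : ∀ ξ, a * ‖ξ‖ ≤ H ξ := fun ξ => (hab ξ).1
  obtain ⟨hu1, hu2, hu3⟩ := hu
  have hu1' : ContDiff ℝ 1 u := hu1.of_le (by exact_mod_cast le_top)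
  have hpc : Continuous (polarNorm H) :=
    (LipschitzWith.of_le_add_mul' a⁻¹ (polarNorm_le_add ha hHa)).continuous
  set p := polarNorm H with hp
  set R := sSup (p '' Ω) with hR
  have hbdd : BddAbove (p '' Ω) :=
    (hΩbdd.isCompact_closure.bddAbove_image hpc.continuousOn).mono (image_mono subset_closure)
  have hlt : ∀ x ∈ Ω, p x < R := fun x hx => polarNorm_lt_sSup ha hHa hΩopen hbdd hx
  have hpnn : ∀ x, 0 ≤ p x := by
    intro x
    rcases eq_or_ne x 0 with rfl | hx
    · have : p (0 : Euc (m + 2)) = 0 := by simpa using polarNorm_smul H le_rfl (0 : Euc (m + 2))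
      exact this.ge
    · exact (polarNorm_pos ha hHa hx).le
  obtain ⟨x₀, hx₀⟩ := hΩconn.nonempty
  have hR0 : 0 < R := (hpnn x₀).trans_lt (hlt x₀ hx₀)
  -- a compactness margin: `p` stays below some `M < R` on the support of `u`
  obtain ⟨M, hM0, hMR, hM⟩ : ∃ M, 0 < M ∧ M < R ∧ ∀ x, u x ≠ 0 → p x < M := by
    rcases (tsupport u).eq_empty_or_nonempty with he | hne
    · refine ⟨R / 2, by positivity, by linarith, fun x hx => ?_⟩
      exact absurd (subset_tsupport u hx) (by simp [he])
    · obtain ⟨y, hy, hmax⟩ := hu2.isCompact.exists_isMaxOn hne hpc.continuousOn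
      have h1 := hlt y (hu3 hy)
      have h2 := hpnn y
      refine ⟨(p y + R) / 2, by linarith, by linarith, fun x hx => ?_⟩
      have h3 : p x ≤ p y := hmax (subset_tsupport u hx)
      linarith
  have key := hardy_lintegral m hpc.measurable (fun x hx => polarNorm_pos ha hHa hx)
    (fun t ht x => polarNorm_smul H ht x) hu1' hM0 hMR hM
  have hgrad : ∀ x, ⟪(p x)⁻¹ • x, gradient u x⟫ = fderiv ℝ u x ((p x)⁻¹ • x) := by
    intro x
    rw [real_inner_comm, ← toDual_gradient, InnerProductSpace.toDual_apply_apply]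
  simp only [hgrad]
  have hsupp : ∀ x, x ∉ Ω → u x = 0 := fun x hx =>
    image_eq_zero_of_notMem_tsupport fun h => hx (hu3 h)
  have hsupp' : ∀ x, x ∉ tsupport u → fderiv ℝ u x = 0 := fun x hx =>
    image_eq_zero_of_notMem_tsupport fun h => hx (tsupport_fderiv_subset ℝ h)
  rw [setIntegral_eq_integral_of_forall_compl_eq_zero (fun x hx => by simp [hsupp x hx]),
    setIntegral_eq_integral_of_forall_compl_eq_zero
      (fun x hx => by simp [hsupp' x fun h => hx (hu3 h)]), ← integral_const_mul]
  have hcast : (((m + 2 : ℕ) : ℝ) - 1) / ((m + 2 : ℕ) : ℝ) = ((m : ℝ) + 1) / (m + 2) := by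
    push_cast; ring
  rw [hcast]
  have hdc : Continuous (fderiv ℝ u) := hu1'.continuous_fderiv (by norm_num)
  have hgm : Measurable fun x => fderiv ℝ u x ((p x)⁻¹ • x) := by
    have h1 : Measurable fun x => (p x)⁻¹ * fderiv ℝ u x x :=
      hpc.measurable.inv.mul (hdc.clm_apply continuous_id).measurable
    simpa using h1
  -- `x / p x` is bounded because `p` is bounded below by a multiple of the norm
  have hb : ∀ x, ‖(p x)⁻¹ • x‖ ≤ |b| := by
    intro x
    rcases eq_or_ne x 0 with rfl | hx
    · simp
    have h0 : 0 < ‖x‖ := norm_pos_iff.2 hx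
    have h1 : 0 < H x := (mul_pos ha h0).trans_le (hHa x)
    have hpx : 0 < p x := polarNorm_pos ha hHa hx
    have h2 : ⟪x, x⟫ / H x ≤ p x := le_csSup (polarNorm_bddAbove ha hHa x) ⟨x, hx, rfl⟩
    rw [real_inner_self_eq_norm_sq, div_le_iff₀ h1] at h2
    have h3 : ‖x‖ ^ 2 ≤ p x * (|b| * ‖x‖) := by
      refine h2.trans (mul_le_mul_of_nonneg_left ((hab x).2.trans ?_) hpx.le)
      gcongr
      exact le_abs_self b
    rw [norm_smul, norm_inv, Real.norm_of_nonneg hpx.le, inv_mul_le_iff₀ hpx]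
    nlinarith
  have hgi : Integrable fun x => |fderiv ℝ u x ((p x)⁻¹ • x)| ^ (m + 2) := by
    have hdom : Integrable fun x => (‖fderiv ℝ u x‖ * |b|) ^ (m + 2) := by
      refine Continuous.integrable_of_hasCompactSupport (by fun_prop) ?_
      refine (hu2.fderiv ℝ).mono fun x hx => ?_
      contrapose! hx
      simp only [Function.mem_support, not_not] at hx ⊢
      simp [hx]
    refine hdom.mono' (by fun_prop) (Eventually.of_forall fun x => ?_)
    rw [Real.norm_of_nonneg (by positivity)]
    gcongr
    exact (fderiv ℝ u x).le_opNorm_of_le (hb x)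
  have hfn : ∀ x, 0 ≤ (((m : ℝ) + 1) / (m + 2)) ^ (m + 2) *
        (|u x| ^ (m + 2) / (p x ^ (m + 2) * Real.log (R / p x) ^ (m + 2))) := by
    intro x
    by_cases hx : x ∈ Ω
    · have h1 := hpnn x
      have h2 : 0 ≤ Real.log (R / p x) := by
        rcases h1.eq_or_lt with h | h
        · simp [← h]
        · exact Real.log_nonneg (by rw [le_div_iff₀ h]; linarith [hlt x hx])
      positivity
    · simp [hsupp x hx]
  have hum : Measurable u := hu1.continuous.measurable
  have hpm : Measurable p := hpc.measurable
  -- the right side is finite, so the inequality of Lebesgue integrals passes to Bochner integrals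
  rw [integral_eq_lintegral_of_nonneg_ae (Eventually.of_forall hfn)
      (by fun_prop : Measurable _).aestronglyMeasurable,
    integral_eq_lintegral_of_nonneg_ae (Eventually.of_forall fun x => by positivity)
      hgi.aestronglyMeasurable]
  refine ENNReal.toReal_mono ?_ key
  exact hgi.lintegral_lt_top.ne
end
end

section
/- Let 1 < p < ∞ and let Ω ⊂ ℝ^N be a bounded domain with Lipschitz boundary, anisotropic distance d_H(x) = inf_{y ∈ ∂Ω} H⁰(x − y) (Lipschitz, with H(∇d_H) = 1 a.e. in Ω), and anisotropic inradius τ_H = sup_{x ∈ Ω} d_H(x) < ∞. Assume ∫_Ω (∇_ξ H)(∇d_H(x)) · ∇φ(x) dx ≥ 0 for every nonnegative φ ∈ C_c^∞(Ω). Then for every nonzero u ∈ C_c^∞(Ω), ∫_Ω H(∇u(x))^p dx ≥ ((p−1)/p)^p · τ_H^{−p} · ∫_Ω |u(x)|^p dx; in particular the first Dirichlet eigenvalue λ_{1,p}(Ω) of the Finsler p-Laplacian, defined as the infimum of ∫_Ω H(∇u)^p dx / ∫_Ω |u|^p dx over nonzero u ∈ C_c^∞(Ω), satisfies λ_{1,p}(Ω)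 ≥ ((p−1)/p)^p (1/τ_H)^p. -/
/-! With `F = ∇H(∇d)` the hypothesis says `∫ F · ∇φ ≥ 0` for smooth nonnegative test functions.
Mollification extends it to Lipschitz `φ` with compact support in `Ω`
(`integral_fderiv_nonneg_of_lipschitz`): the mollified gradients are the mollifications of the
gradient, hence they are uniformly bounded and converge almost everywhere.

The inequality is then tested with `φ = |u|^p (d + δ)^(1-p)`, `δ > 0`. Euler's identity
`∇H(ξ) · ξ = H(ξ)`, the eikonal equation `H(∇d) = 1` and `∇H(ξ) · v ≤ H(v)` give, with
`A = |u| / (d + δ)`,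
`F · ∇φ ≤ p A^(p-1) H(∇u) - (p-1) A^p`,
and Young's inequality (`hardy_pointwise`) bounds a positive multiple of the left side by
`H(∇u)^p - ((p-1)/p)^p A^p`. Integrating, using `d ≤ τ`, and letting `δ → 0` yields the claim.
The shift by `δ` makes a lower bound for `d` on the support of `u` unnecessary. -/

open MeasureTheory Set Filter
open scoped RealInnerProductSpace Topology ENNReal NNReal

noncomputable section

/-! ### Finsler norms -/

lemma inner_gradient_eq_fderiv {N : ℕ} (f : Euc N → ℝ) (x a : Euc N) :
    ⟪a, gradient f x⟫ = fderiv ℝ f x a := by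
  rw [real_inner_comm, gradient, InnerProductSpace.toDual_symm_apply]

lemma measurable_gradient {N : ℕ} (f : Euc N → ℝ) : Measurable (gradient f) :=
  (InnerProductSpace.toDual ℝ (Euc N)).symm.continuous.measurable.comp (measurable_fderiv ℝ f)

namespace IsFinslerNorm

variable {N : ℕ} {H : Euc N → ℝ}

lemma map_zero' (hH : IsFinslerNorm H) : H 0 = 0 := by
  simpa using hH.homog 0 0

lemma add_le (hH : IsFinslerNorm H) (x y : Euc N) : H (x + y) ≤ H x + H y := by
  have h := hH.convexOn.2 (mem_univ ((2 : ℝ) • x)) (mem_univ ((2 : ℝ) • y))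
    (by norm_num : (0 : ℝ) ≤ 1 / 2) (by norm_num : (0 : ℝ) ≤ 1 / 2) (by norm_num)
  simp only [smul_smul, hH.homog, smul_eq_mul] at h
  norm_num at h
  linarith

lemma exists_lipschitz (hH : IsFinslerNorm H) : ∃ K : ℝ≥0, LipschitzWith K H := by
  obtain ⟨a, b, ha, hab, h⟩ := hH.bounds
  refine ⟨⟨b, by linarith⟩, LipschitzWith.of_le_add_mul _ fun x y => ?_⟩
  have h1 := hH.add_le y (x - y)
  rw [add_sub_cancel] at h1
  have h2 := (h (x - y)).2
  rw [dist_eq_norm]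
  exact h1.trans (by gcongr; exact h2)

lemma differentiableAt (hH : IsFinslerNorm H) {ξ : Euc N} (hξ : ξ ≠ 0) :
    DifferentiableAt ℝ H ξ :=
  (hH.smooth.contDiffAt (isOpen_compl_singleton.mem_nhds hξ)).differentiableAt (by norm_num)

/-- Euler's identity for the one-homogeneous function `H`. -/
lemma fderiv_self (hH : IsFinslerNorm H) {ξ : Euc N} (hξ : ξ ≠ 0) :
    fderiv ℝ H ξ ξ = H ξ := by
  have h1 : HasDerivAt (fun t : ℝ => H (t • ξ)) (fderiv ℝ H ξ ξ) 1 := by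
    have hd : HasFDerivAt H (fderiv ℝ H ξ) ((1 : ℝ) • ξ) := by
      rw [one_smul]; exact (hH.differentiableAt hξ).hasFDerivAt
    have hs : HasDerivAt (fun t : ℝ => t • ξ) ((1 : ℝ) • ξ) 1 := (hasDerivAt_id 1).smul_const ξ
    have h := hd.comp_hasDerivAt (1 : ℝ) hs
    rw [one_smul] at h
    exact h
  have h2 : HasDerivAt (fun t : ℝ => H (t • ξ)) (H ξ) 1 := by
    have h : HasDerivAt (fun t : ℝ => t * H ξ) (1 * H ξ) 1 := (hasDerivAt_id 1).mul_const _
    rw [one_mul] at h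
    refine h.congr_of_eventuallyEq ?_
    filter_upwards [lt_mem_nhds (zero_lt_one : (0 : ℝ) < 1)] with t ht
    rw [hH.homog, abs_of_pos ht]
  exact h1.unique h2

/-- The gradient of `H` lies in the polar unit ball. -/
lemma fderiv_le (hH : IsFinslerNorm H) {ξ : Euc N} (hξ : ξ ≠ 0) (v : Euc N) :
    fderiv ℝ H ξ v ≤ H v := by
  have h := (hH.differentiableAt hξ).hasFDerivAt.hasLineDerivAt v
  have h' : HasDerivAt (fun t : ℝ => H (ξ + t • v)) (fderiv ℝ H ξ v) 0 := h
  refine le_of_tendsto h'.tendsto_slope_zero_right ?_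
  filter_upwards [self_mem_nhdsWithin] with t ht
  have ht : 0 < t := ht
  have h1 := hH.add_le ξ (t • v)
  rw [hH.homog, abs_of_pos ht] at h1
  simp only [zero_add, zero_smul, add_zero, smul_eq_mul]
  rw [inv_mul_le_iff₀ ht]
  linarith

lemma abs_fderiv_le (hH : IsFinslerNorm H) {ξ : Euc N} (hξ : ξ ≠ 0) (v : Euc N) :
    |fderiv ℝ H ξ v| ≤ H v := by
  refine abs_le.2 ⟨?_, hH.fderiv_le hξ v⟩
  have h := hH.fderiv_le hξ (-v)
  have h2 : H (-v) = H v := by simpa using hH.homog (-1) v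
  rw [map_neg, h2] at h
  linarith

lemma polarNorm_nonneg (hH : IsFinslerNorm H) (x : Euc N) : 0 ≤ polarNorm H x := by
  by_cases hx : x = 0
  · subst hx
    refine Real.sSup_nonneg ?_
    rintro r ⟨ξ, -, rfl⟩
    simp
  · exact Real.sSup_nonneg' ⟨_, ⟨x, hx, rfl⟩, div_nonneg real_inner_self_nonneg (hH.nonneg x)⟩

end IsFinslerNorm

/-! ### Lipschitz test functions -/

/-- Mollification commutes with differentiation for Lipschitz functions, by Rademacher's theorem. -/
lemma hasFDerivAt_mollify {N : ℕ} {φ : Euc N → ℝ} {K : ℝ≥0} (hφ : LipschitzWith K φ)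
    (ρ : ContDiffBump (0 : Euc N)) (x : Euc N) :
    HasFDerivAt (convolution (ρ.normed volume) φ (ContinuousLinearMap.lsmul ℝ ℝ) volume)
      (convolution (ρ.normed volume) (fderiv ℝ φ) (ContinuousLinearMap.lsmul ℝ ℝ) volume x) x := by
  have hmp : ∀ y : Euc N, MeasurePreserving (fun a => y - a) (volume : Measure (Euc N)) volume :=
    fun y => Measure.measurePreserving_sub_left volume y
  refine (hasFDerivAt_integral_of_dominated_loc_of_lip (s := univ)
    (F := fun y a => ρ.normed volume a • φ (y - a))
    (F' := fun a => ρ.normed volume a • fderiv ℝ φ (x - a))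
    (bound := fun a => ρ.normed volume a * K) univ_mem ?_ ?_ ?_ ?_ ?_ ?_).2
  · refine Eventually.of_forall fun y => Continuous.aestronglyMeasurable ?_
    exact ρ.continuous_normed.smul (hφ.continuous.comp (by fun_prop))
  · refine Continuous.integrable_of_hasCompactSupport
      (ρ.continuous_normed.smul (hφ.continuous.comp (by fun_prop))) ?_
    exact ρ.hasCompactSupport_normed.smul_right
  · refine Measurable.aestronglyMeasurable ?_
    exact ρ.continuous_normed.measurable.smul
      ((measurable_fderiv ℝ φ).comp (measurable_const.sub measurable_id))
  · refine Eventually.of_forall fun a => ?_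
    refine LipschitzOnWith.of_dist_le_mul fun y _ z _ => ?_
    have h1 := hφ.dist_le_mul (y - a) (z - a)
    rw [dist_sub_right] at h1
    have h0 : 0 ≤ ρ.normed volume a := ρ.nonneg_normed a
    rw [Real.coe_nnabs, abs_of_nonneg (mul_nonneg h0 K.coe_nonneg), dist_smul₀, Real.norm_of_nonneg h0,
      mul_assoc]
    gcongr
  · exact ρ.integrable_normed.mul_const _
  · have h := (hmp x).quasiMeasurePreserving.ae hφ.ae_differentiableAt
    filter_upwards [h] with a ha
    have h2 : HasFDerivAt (fun y => φ (y - a)) (fderiv ℝ φ (x - a)) x := by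
      exact ha.hasFDerivAt.comp x ((hasFDerivAt_id x).sub_const a)
    exact h2.const_smul (ρ.normed volume a)

/-- The weak supersolution inequality, extended from smooth to Lipschitz test functions. -/
lemma integral_fderiv_nonneg_of_lipschitz {N : ℕ} {Ω : Set (Euc N)} (hΩ : IsOpen Ω)
    (hΩb : Bornology.IsBounded Ω) {F : Euc N → Euc N} (hF : Measurable F) {B : ℝ}
    (hB : ∀ x, ‖F x‖ ≤ B)
    (hsuper : ∀ φ : Euc N → ℝ, IsTestFun Ω φ → (∀ x, 0 ≤ φ x) →
      0 ≤ ∫ x in Ω, fderiv ℝ φ x (F x))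
    {φ : Euc N → ℝ} {K : ℝ≥0} (hφ : LipschitzWith K φ) (hc : HasCompactSupport φ)
    (hs : tsupport φ ⊆ Ω) (h0 : ∀ x, 0 ≤ φ x) :
    Integrable (fun x => fderiv ℝ φ x (F x)) (volume.restrict Ω) ∧
      0 ≤ ∫ x in Ω, fderiv ℝ φ x (F x) := by
  have hfin : IsFiniteMeasure (volume.restrict Ω : Measure (Euc N)) :=
    ⟨by rw [Measure.restrict_apply_univ]; exact hΩb.measure_lt_top⟩
  have hmeas : ∀ ψ : Euc N → ℝ, Measurable fun x => fderiv ℝ ψ x (F x) := fun ψ => by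
    simp_rw [← inner_gradient_eq_fderiv]
    exact hF.inner (measurable_gradient ψ)
  have hbd : ∀ (ψ : Euc N → ℝ) (x), ‖fderiv ℝ ψ x‖ ≤ K → ‖fderiv ℝ ψ x (F x)‖ ≤ K * B :=
    fun ψ x h => ((fderiv ℝ ψ x).le_opNorm _).trans
      (mul_le_mul h (hB x) (norm_nonneg _) K.coe_nonneg)
  refine ⟨Integrable.of_bound (hmeas φ).aestronglyMeasurable (K * B)
    (Eventually.of_forall fun x => hbd φ x (norm_fderiv_le_of_lipschitz ℝ hφ)), ?_⟩
  obtain ⟨r, hr, hrΩ⟩ := hc.isCompact.exists_cthickening_subset_open hΩ hs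
  let ρ : ℕ → ContDiffBump (0 : Euc N) := fun n =>
    ⟨r / (n + 1) / 2, r / (n + 1), by positivity, half_lt_self (by positivity)⟩
  have hout : ∀ n, (ρ n).rOut = r / (n + 1) := fun n => rfl
  have hin : ∀ n, (ρ n).rIn = r / (n + 1) / 2 := fun n => rfl
  let ψ : ℕ → Euc N → ℝ := fun n =>
    convolution ((ρ n).normed volume) φ (ContinuousLinearMap.lsmul ℝ ℝ) volume
  have hψd : ∀ n x, HasFDerivAt (ψ n) (convolution ((ρ n).normed volume) (fderiv ℝ φ)
      (ContinuousLinearMap.lsmul ℝ ℝ) volume x) x := fun n x => hasFDerivAt_mollify hφ (ρ n) x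
  have htest : ∀ n, IsTestFun Ω (ψ n) := by
    intro n
    refine ⟨(ρ n).hasCompactSupport_normed.contDiff_convolution_left _ (ρ n).contDiff_normed
      hφ.continuous.locallyIntegrable, (ρ n).hasCompactSupport_normed.convolution _ hc, ?_⟩
    refine Subset.trans ?_ hrΩ
    refine closure_minimal ?_ Metric.isClosed_cthickening
    refine (support_convolution_subset _).trans ?_
    rintro _ ⟨y, hy, z, hz, rfl⟩
    rw [(ρ n).support_normed_eq, Metric.mem_ball, dist_zero_right, hout] at hy
    refine Metric.mem_cthickening_of_dist_le _ z r _ (subset_tsupport φ hz) ?_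
    have hle : r / (n + 1) ≤ r := div_le_self hr.le (by linarith [n.cast_nonneg (α := ℝ)])
    simpa using hy.le.trans hle
  have hψ0 : ∀ n x, 0 ≤ ψ n x := fun n x =>
    integral_nonneg fun a => mul_nonneg ((ρ n).nonneg_normed a) (h0 _)
  have hψK : ∀ n x, ‖fderiv ℝ (ψ n) x‖ ≤ K := by
    intro n x
    rw [(hψd n x).fderiv, convolution_def]
    refine (norm_integral_le_of_norm_le ((ρ n).integrable_normed.mul_const (K : ℝ))
      (Eventually.of_forall fun a => ?_)).trans ?_
    · rw [ContinuousLinearMap.lsmul_apply, norm_smul, Real.norm_of_nonneg ((ρ n).nonneg_normed a)]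
      exact mul_le_mul_of_nonneg_left (norm_fderiv_le_of_lipschitz ℝ hφ) ((ρ n).nonneg_normed a)
    · rw [integral_mul_const, (ρ n).integral_normed, one_mul]
  have hli : LocallyIntegrable (fderiv ℝ φ) (volume : Measure (Euc N)) := by
    refine (locallyIntegrable_const (K : ℝ)).mono (measurable_fderiv ℝ φ).aestronglyMeasurable ?_
    refine Eventually.of_forall fun x => ?_
    rw [Real.norm_of_nonneg K.coe_nonneg]
    exact norm_fderiv_le_of_lipschitz ℝ hφ
  have htend : Tendsto (fun n => (ρ n).rOut) atTop (𝓝 0) := by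
    simp_rw [hout, div_eq_mul_one_div r]
    simpa using (tendsto_one_div_add_atTop_nhds_zero_nat (𝕜 := ℝ)).const_mul r
  have hconv := ContDiffBump.ae_convolution_tendsto_right_of_locallyIntegrable (K := 2) htend
    (Eventually.of_forall fun n => by rw [hout, hin]; linarith) hli
  have hlim : Tendsto (fun n => ∫ x in Ω, fderiv ℝ (ψ n) x (F x)) atTop
      (𝓝 (∫ x in Ω, fderiv ℝ φ x (F x))) := by
    refine tendsto_integral_of_dominated_convergence (fun _ => K * B)
      (fun n => (hmeas _).aestronglyMeasurable) (integrable_const _)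
      (fun n => Eventually.of_forall fun x => hbd _ x (hψK n x)) ?_
    filter_upwards [ae_restrict_of_ae hconv] with x hx
    simp_rw [fun n => (hψd n x).fderiv]
    exact ((ContinuousLinearMap.apply ℝ ℝ (F x)).continuous.tendsto _).comp hx
  exact ge_of_tendsto' hlim fun n => hsuper _ (htest n) (hψ0 n)

/-! ### The Hardy-type inequality -/

/-- Young's inequality in the form needed for the optimal constant `k ^ p`, `k = (p - 1) / p`. -/
lemma hardy_pointwise_s6 {p A h : ℝ} (hp : 1 < p) (hA : 0 ≤ A) (hh : 0 ≤ h) :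
    ((p - 1) / p) ^ (p - 1) * (p * A ^ (p - 1) * h - (p - 1) * A ^ p) ≤
      h ^ p - ((p - 1) / p) ^ p * A ^ p := by
  have hp0 : 0 < p := by linarith
  set k := (p - 1) / p with hk
  have hk0 : 0 < k := div_pos (by linarith) hp0
  have hpk : p - 1 = p * k := by rw [hk]; field_simp
  have hpq : p.HolderConjugate (p / (p - 1)) := Real.HolderConjugate.conjExponent hp
  have hy := Real.young_inequality_of_nonneg hh
    (Real.rpow_nonneg (mul_nonneg hk0.le hA) (p - 1)) hpq
  rw [← Real.rpow_mul (mul_nonneg hk0.le hA), mul_div_cancel₀ _ (by linarith : p - 1 ≠ 0),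
    Real.mul_rpow hk0.le hA, Real.mul_rpow hk0.le hA] at hy
  have hkp : k ^ p = k ^ (p - 1) * k := by
    rw [← Real.rpow_add_one hk0.ne']; congr 1; ring
  have e1 : k ^ p * A ^ p / (p / (p - 1)) = k * (k ^ p * A ^ p) := by
    rw [hk]; field_simp
  rw [e1] at hy
  have hy' := mul_le_mul_of_nonneg_left hy hp0.le
  rw [mul_add, mul_div_cancel₀ _ hp0.ne'] at hy'
  have e2 : p * (k * (k ^ p * A ^ p)) = (p - 1) * (k ^ p * A ^ p) := by rw [hpk]; ring
  have e3 : k ^ (p - 1) * ((p - 1) * A ^ p) = p * (k ^ p * A ^ p) := by rw [hkp, hpk]; ring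
  rw [e2] at hy'
  rw [mul_sub, e3]
  linarith

lemma exists_lipschitz_mul {X : Type*} [PseudoMetricSpace X] {f g : X → ℝ} {K L : ℝ≥0}
    {M R : ℝ} (hf : LipschitzWith K f) (hg : LipschitzWith L g) (hM : ∀ x, |f x| ≤ M)
    (hR : ∀ x, |g x| ≤ R) : ∃ C : ℝ≥0, LipschitzWith C fun x => f x * g x := by
  refine ⟨Real.toNNReal (M * L + K * R), LipschitzWith.of_dist_le_mul fun x y => ?_⟩
  refine le_trans ?_ (mul_le_mul_of_nonneg_right (Real.le_coe_toNNReal _) dist_nonneg)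
  have h1 := hf.dist_le_mul x y
  have h2 := hg.dist_le_mul x y
  rw [Real.dist_eq] at h1 h2 ⊢
  have e : f x * g x - f y * g y = f x * (g x - g y) + (f x - f y) * g y := by ring
  rw [e]
  refine (abs_add_le _ _).trans ?_
  rw [abs_mul, abs_mul]
  calc _ ≤ M * (L * dist x y) + (K * dist x y) * R := by
        gcongr
        · exact (abs_nonneg _).trans (hM x)
        · exact hM x
        · exact hR y
    _ = _ := by ring

lemma exists_lipschitz_rpow {X : Type*} [PseudoMetricSpace X] {D : X → ℝ} {K : ℝ≥0}
    (hD : LipschitzWith K D) {δ : ℝ} (hδ : 0 < δ) (hDδ : ∀ x, δ ≤ D x) {q : ℝ} (hq : q ≤ 0) :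
    ∃ C : ℝ≥0, LipschitzWith C fun x => D x ^ q := by
  have h : LipschitzOnWith (Real.toNNReal (|q| * δ ^ (q - 1))) (fun t : ℝ => t ^ q) (Ici δ) := by
    refine (convex_Ici δ).lipschitzOnWith_of_nnnorm_deriv_le (𝕜 := ℝ) (fun t ht => ?_)
      fun t ht => ?_
    · exact (Real.hasDerivAt_rpow_const (Or.inl (hδ.trans_le ht).ne')).differentiableAt
    · have ht0 : 0 < t := hδ.trans_le ht
      rw [(Real.hasDerivAt_rpow_const (Or.inl ht0.ne')).deriv, ← NNReal.coe_le_coe, coe_nnnorm]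
      refine le_trans ?_ (Real.le_coe_toNNReal _)
      rw [Real.norm_eq_abs, abs_mul, abs_of_nonneg (Real.rpow_nonneg ht0.le _)]
      exact mul_le_mul_of_nonneg_left
        (Real.rpow_le_rpow_of_nonpos hδ ht (by linarith)) (abs_nonneg _)
  have h2 := h.comp (lipschitzOnWith_univ.2 hD) (fun x _ => hDδ x)
  exact ⟨_, lipschitzOnWith_univ.1 h2⟩


/-- Upper bound for the derivative of the test function `|u| ^ p * (D + δ) ^ (1 - p)` in the
direction `∇H(∇D)`, at a point where `D` solves the eikonal equation. -/
lemma fderiv_testFun_le {N : ℕ} {H : Euc N → ℝ} (hH : IsFinslerNorm H) {p : ℝ} (hp : 1 < p)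
    {u D : Euc N → ℝ} {x : Euc N} (hu : DifferentiableAt ℝ u x) (hD : DifferentiableAt ℝ D x)
    (heik : H (gradient D x) = 1) {e τ δ : ℝ} (he : e = D x + δ) (he0 : 0 < e) (heτ : e ≤ τ) :
    ((p - 1) / p) ^ (p - 1) *
      fderiv ℝ (fun y => |u y| ^ p * (D y + δ) ^ (1 - p)) x (gradient H (gradient D x)) ≤
      H (gradient u x) ^ p - ((p - 1) / p) ^ p * (τ ^ (-p) * |u x| ^ p) := by
  have hp0 : 0 < p := by linarith
  have hk0 : 0 < (p - 1) / p := div_pos (by linarith) hp0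
  have hξ : gradient D x ≠ 0 := fun h => by
    rw [h, hH.map_zero'] at heik; norm_num at heik
  have hv : HasFDerivAt (fun y => |u y| ^ p) ((p * |u x| ^ (p - 2) * u x) • fderiv ℝ u x) x :=
    (hasDerivAt_abs_rpow (u x) hp).comp_hasFDerivAt x hu.hasFDerivAt
  have hw : HasFDerivAt (fun y => (D y + δ) ^ (1 - p))
      (((1 - p) * e ^ (1 - p - 1)) • fderiv ℝ D x) x := by
    have h := Real.hasDerivAt_rpow_const (x := D x + δ) (p := 1 - p) (Or.inl (he ▸ he0.ne'))
    rw [← he] at h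
    subst he
    exact h.comp_hasFDerivAt x (hD.hasFDerivAt.add_const δ)
  have e1 : fderiv ℝ D x (gradient H (gradient D x)) = 1 := by
    rw [← inner_gradient_eq_fderiv, real_inner_comm, inner_gradient_eq_fderiv, hH.fderiv_self hξ,
      heik]
  have e2 : |fderiv ℝ u x (gradient H (gradient D x))| ≤ H (gradient u x) := by
    rw [← inner_gradient_eq_fderiv, real_inner_comm, inner_gradient_eq_fderiv]
    exact hH.abs_fderiv_le hξ _
  have hh := hH.nonneg (gradient u x)
  set h := H (gradient u x)
  rw [(hv.fun_mul hw).fderiv]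
  simp only [add_apply, smul_apply, smul_eq_mul, e1, ← he]
  set g := fderiv ℝ u x (gradient H (gradient D x))
  have hU : |u x| ^ (p - 2) * u x * g ≤ |u x| ^ (p - 1) * h := by
    refine (le_abs_self _).trans ?_
    rw [abs_mul, abs_mul, abs_of_nonneg (Real.rpow_nonneg (abs_nonneg _) _)]
    refine mul_le_mul ?_ e2 (abs_nonneg _) (Real.rpow_nonneg (abs_nonneg _) _)
    rcases eq_or_ne (u x) 0 with h0 | h0
    · rw [h0, abs_zero, mul_zero]; exact Real.rpow_nonneg le_rfl _
    · rw [← Real.rpow_add_one (abs_ne_zero.2 h0)]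
      exact le_of_eq (by congr 1; ring)
  have hA : 0 ≤ |u x| / e := div_nonneg (abs_nonneg _) he0.le
  have key := hardy_pointwise_s6 hp hA hh
  have a1 : (|u x| / e) ^ (p - 1) = |u x| ^ (p - 1) * e ^ (1 - p) := by
    rw [Real.div_rpow (abs_nonneg _) he0.le, div_eq_mul_inv, ← Real.rpow_neg he0.le, neg_sub]
  have a2 : (|u x| / e) ^ p = |u x| ^ p * e ^ (-p) := by
    rw [Real.div_rpow (abs_nonneg _) he0.le, div_eq_mul_inv, ← Real.rpow_neg he0.le]
  have a3 : (1 - p - 1 : ℝ) = -p := by ring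
  rw [a1, a2] at key
  rw [a3]
  have hmono : τ ^ (-p) ≤ e ^ (-p) := Real.rpow_le_rpow_of_nonpos he0 heτ (by linarith)
  have hw0 : 0 ≤ e ^ (1 - p) := Real.rpow_nonneg he0.le _
  have hv0 : 0 ≤ |u x| ^ p := Real.rpow_nonneg (abs_nonneg _) _
  calc _ ≤ ((p - 1) / p) ^ (p - 1) * (p * (|u x| ^ (p - 1) * e ^ (1 - p)) * h
        - (p - 1) * (|u x| ^ p * e ^ (-p))) := by
        refine mul_le_mul_of_nonneg_left ?_ (Real.rpow_nonneg hk0.le _)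
        have := mul_le_mul_of_nonneg_left hU (mul_nonneg hp0.le hw0)
        linarith
    _ ≤ _ := key
    _ ≤ _ := by
        have h1 := mul_le_mul_of_nonneg_left hmono hv0
        have h2 := mul_le_mul_of_nonneg_left h1 (Real.rpow_nonneg hk0.le p)
        linarith

lemma continuous_gradient_testFun {N : ℕ} {Ω : Set (Euc N)} {u : Euc N → ℝ}
    (hu : IsTestFun Ω u) : Continuous (gradient u) :=
  (InnerProductSpace.toDual ℝ (Euc N)).symm.continuous.comp (hu.1.continuous_fderiv (by simp))

lemma integrable_energy {N : ℕ} {H : Euc N → ℝ} (hH : IsFinslerNorm H) {p : ℝ} (hp : 1 < p)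
    {Ω : Set (Euc N)} {u : Euc N → ℝ} (hu : IsTestFun Ω u) :
    Integrable (fun x => H (gradient u x) ^ p) := by
  obtain ⟨K, hK⟩ := hH.exists_lipschitz
  refine Continuous.integrable_of_hasCompactSupport ?_ ?_
  · exact (hK.continuous.comp (continuous_gradient_testFun hu)).rpow_const
      fun x => Or.inr (by linarith)
  · refine (hu.2.1.fderiv ℝ).mono ?_
    intro x hx h
    apply hx
    have h' : gradient u x = 0 := by rw [gradient, h, map_zero]
    simp only [h', hH.map_zero']
    exact Real.zero_rpow (by linarith)

lemma continuous_mass {N : ℕ} {p : ℝ} (hp : 1 < p) {Ω : Set (Euc N)} {u : Euc N → ℝ}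
    (hu : IsTestFun Ω u) : Continuous (fun x => |u x| ^ p) :=
  hu.1.continuous.abs.rpow_const fun x => Or.inr (by linarith)

lemma hasCompactSupport_mass {N : ℕ} {p : ℝ} (hp : 1 < p) {Ω : Set (Euc N)} {u : Euc N → ℝ}
    (hu : IsTestFun Ω u) : HasCompactSupport (fun x => |u x| ^ p) :=
  hu.2.1.comp_left (g := fun t : ℝ => |t| ^ p)
    (by rw [abs_zero]; exact Real.zero_rpow (by linarith))

lemma integral_mass_pos {N : ℕ} {p : ℝ} (hp : 1 < p) {Ω : Set (Euc N)} {u : Euc N → ℝ}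
    (hu : IsTestFun Ω u) (hu0 : u ≠ 0) : 0 < ∫ x in Ω, |u x| ^ p := by
  have hnn : ∀ x, 0 ≤ |u x| ^ p := fun x => Real.rpow_nonneg (abs_nonneg _) _
  rw [setIntegral_eq_integral_of_forall_compl_eq_zero]
  · obtain ⟨x, hx⟩ := Function.ne_iff.1 hu0
    exact (continuous_mass hp hu).integral_pos_of_hasCompactSupport_nonneg_nonzero
      (hasCompactSupport_mass hp hu) hnn
      (x := x) (Real.rpow_pos_of_pos (abs_pos.2 hx) p).ne'
  · intro x hx
    rw [image_eq_zero_of_notMem_tsupport fun h => hx (hu.2.2 h), abs_zero]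
    exact Real.zero_rpow (by linarith)

/-- The eigenvalue inequality with `τ + δ` in place of `τ`. -/
lemma finsler_hardy_shifted {N : ℕ} {H : Euc N → ℝ} (hH : IsFinslerNorm H)
    {p : ℝ} (hp : 1 < p) {Ω : Set (Euc N)} (hΩopen : IsOpen Ω)
    (hΩbdd : Bornology.IsBounded Ω) {dH : Euc N → ℝ} (hd0 : ∀ x, 0 ≤ dH x)
    {K : ℝ≥0} (hLip : LipschitzOnWith K dH Ω)
    (heik : ∀ᵐ x ∂(volume.restrict Ω), H (gradient dH x) = 1)
    (hsuper : ∀ φ : Euc N → ℝ, IsTestFun Ω φ → (∀ x, 0 ≤ φ x) →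
      0 ≤ ∫ x in Ω, ⟪gradient H (gradient dH x), gradient φ x⟫)
    {τ : ℝ} (hτ : ∀ x ∈ Ω, dH x ≤ τ) {δ : ℝ} (hδ : 0 < δ)
    {u : Euc N → ℝ} (hu : IsTestFun Ω u) :
    ((p - 1) / p) ^ p * (τ + δ) ^ (-p) * ∫ x in Ω, |u x| ^ p
        ≤ ∫ x in Ω, H (gradient u x) ^ p := by
  have hk0 : 0 < (p - 1) / p := div_pos (by linarith) (by linarith)
  -- A globally Lipschitz nonnegative function that agrees with `dH` on `Ω`.
  obtain ⟨D, hDlip, hD0, hDeq⟩ : ∃ D : Euc N → ℝ, LipschitzWith K D ∧ (∀ x, 0 ≤ D x) ∧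
      EqOn dH D Ω := by
    obtain ⟨D, h1, h2⟩ := hLip.extend_real
    refine ⟨fun x => max (D x) 0, h1.max_const 0, fun x => le_max_right _ _, fun x hx => ?_⟩
    simp only [← h2 hx, max_eq_left (hd0 x)]
  obtain ⟨Cv, hCv⟩ : ∃ C, LipschitzWith C (fun x => |u x| ^ p) := by
    refine ContDiff.lipschitzWith_of_hasCompactSupport (𝕂 := ℝ) (hasCompactSupport_mass hp hu)
      (n := 1) ?_ one_ne_zero
    exact (hu.1.of_le (by exact_mod_cast le_top)).norm_rpow hp
  have hDδ : ∀ x, δ ≤ D x + δ := fun x => by linarith [hD0 x]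
  obtain ⟨Cw, hCw⟩ := exists_lipschitz_rpow (q := 1 - p)
    (hDlip.add (LipschitzWith.const δ)) hδ hDδ (by linarith)
  obtain ⟨M, hM⟩ := (hasCompactSupport_mass hp hu).exists_bound_of_continuous
    (continuous_mass hp hu)
  obtain ⟨C, hC⟩ := exists_lipschitz_mul hCv hCw hM (R := δ ^ (1 - p)) fun x => by
    rw [abs_of_nonneg (Real.rpow_nonneg (hδ.le.trans (hDδ x)) _)]
    exact Real.rpow_le_rpow_of_nonpos hδ (hDδ x) (by linarith)
  obtain ⟨B, hB⟩ := hH.exists_lipschitz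
  have hsub : tsupport (fun x => |u x| ^ p * (D x + δ) ^ (1 - p)) ⊆ tsupport u := by
    refine closure_mono fun x hx h => hx ?_
    simp only [h, abs_zero, Real.zero_rpow (by linarith : p ≠ 0), zero_mul]
  obtain ⟨hint, hpos⟩ := integral_fderiv_nonneg_of_lipschitz hΩopen hΩbdd
    (F := fun x => gradient H (gradient dH x)) (B := B)
    ((measurable_gradient H).comp (measurable_gradient dH))
    (fun x => by
      rw [gradient, LinearIsometryEquiv.norm_map]
      exact norm_fderiv_le_of_lipschitz ℝ hB)
    (fun φ h1 h2 => by simpa only [inner_gradient_eq_fderiv] using hsuper φ h1 h2)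
    hC (hu.2.1.of_isClosed_subset (isClosed_tsupport _) hsub) (hsub.trans hu.2.2)
    (fun x => mul_nonneg (Real.rpow_nonneg (abs_nonneg _) _)
      (Real.rpow_nonneg (hδ.le.trans (hDδ x)) _))
  have hI1 := (integrable_energy hH hp hu).restrict (s := Ω)
  have hI2 : Integrable (fun x => |u x| ^ p) (volume.restrict Ω) :=
    ((continuous_mass hp hu).integrable_of_hasCompactSupport
      (hasCompactSupport_mass hp hu)).restrict
  have hle := integral_mono_ae (hint.const_mul (((p - 1) / p) ^ (p - 1)))
    (hI1.sub ((hI2.const_mul ((τ + δ) ^ (-p))).const_mul (((p - 1) / p) ^ p))) (by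
      filter_upwards [heik, ae_restrict_mem hΩopen.measurableSet] with x hx hxΩ
      have hev : dH =ᶠ[𝓝 x] D := hDeq.eventuallyEq_of_mem (hΩopen.mem_nhds hxΩ)
      rw [hev.gradient_eq] at hx ⊢
      -- A gradient different from the junk value `0` forces differentiability.
      have hdiff : DifferentiableAt ℝ D x := by
        by_contra hn
        rw [gradient_eq_zero_of_not_differentiableAt hn, hH.map_zero'] at hx
        norm_num at hx
      exact fderiv_testFun_le hH hp (hu.1.differentiable (by simp) x) hdiff hx rfl
        (hδ.trans_le (hDδ x)) (by linarith [hτ x hxΩ, hDeq hxΩ]))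
  rw [integral_const_mul, integral_sub' hI1
    ((hI2.const_mul ((τ + δ) ^ (-p))).const_mul (((p - 1) / p) ^ p)), integral_const_mul,
    integral_const_mul] at hle
  have := mul_nonneg (Real.rpow_nonneg hk0.le (p - 1)) hpos
  linarith

/-- Lower bound for the first eigenvalue of the Finsler p-Laplacian in terms of
the anisotropic inradius τ_H = sup over Ω of d_H. -/
theorem finsler_eigenvalue_lower_bound
    (N : ℕ) (hN : 2 ≤ N) (H : Euc N → ℝ) (hH : IsFinslerNorm H)
    (p : ℝ) (hp : 1 < p)
    (Ω : Set (Euc N)) (hΩopen : IsOpen Ω) (hΩconn : IsConnected Ω)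
    (hΩbdd : Bornology.IsBounded Ω)
    (dH : Euc N → ℝ)
    (hdH : ∀ x, dH x = sInf {r : ℝ | ∃ y ∈ frontier Ω, r = polarNorm H (x - y)})
    (hLip : ∃ K : ℝ≥0, LipschitzOnWith K dH Ω)
    (heik : ∀ᵐ x ∂(volume.restrict Ω), H (gradient dH x) = 1)
    (hsuper : ∀ φ : Euc N → ℝ, IsTestFun Ω φ → (∀ x, 0 ≤ φ x) →
      0 ≤ ∫ x in Ω, ⟪gradient H (gradient dH x), gradient φ x⟫) :
    (∀ u : Euc N → ℝ, IsTestFun Ω u → u ≠ 0 →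
      ((p - 1) / p) ^ p * sSup (dH '' Ω) ^ (-p) * ∫ x in Ω, |u x| ^ p
        ≤ ∫ x in Ω, H (gradient u x) ^ p) ∧
    ((p - 1) / p) ^ p * (1 / sSup (dH '' Ω)) ^ p ≤
      sInf {r : ℝ | ∃ u : Euc N → ℝ, IsTestFun Ω u ∧ u ≠ 0 ∧
        r = (∫ x in Ω, H (gradient u x) ^ p) / ∫ x in Ω, |u x| ^ p} := by
  obtain ⟨K, hK⟩ := hLip
  have hd0 : ∀ x, 0 ≤ dH x := fun x => by
    rw [hdH]
    refine Real.sInf_nonneg ?_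
    rintro r ⟨y, -, rfl⟩
    exact hH.polarNorm_nonneg _
  have hbdd : BddAbove (dH '' Ω) := by
    obtain ⟨D, h1, h2⟩ := hK.extend_real
    rw [h2.image_eq]
    exact (h1.isBounded_image hΩbdd).bddAbove
  have hle : ∀ x ∈ Ω, dH x ≤ sSup (dH '' Ω) := fun x hx => le_csSup hbdd (mem_image_of_mem _ hx)
  set τ := sSup (dH '' Ω)
  -- If `τ = 0`, then `dH` vanishes on the open set `Ω`, against the eikonal equation.
  have hτ : 0 < τ := by
    obtain ⟨x₀, hx₀⟩ := hΩconn.nonempty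
    by_contra hn
    have hz : EqOn dH (fun _ => 0) Ω := fun x hx =>
      le_antisymm ((hle x hx).trans (not_lt.1 hn)) (hd0 x)
    have hfalse : ∀ᵐ x ∂(volume.restrict Ω), False := by
      filter_upwards [heik, ae_restrict_mem hΩopen.measurableSet] with x hx hxΩ
      rw [(hz.eventuallyEq_of_mem (hΩopen.mem_nhds hxΩ)).gradient_eq, gradient_fun_const,
        hH.map_zero'] at hx
      norm_num at hx
    have hvol := ae_iff.1 hfalse
    simp only [not_false_eq_true, ofPred_true, Measure.restrict_apply_univ] at hvol
    exact (hΩopen.measure_pos volume ⟨x₀, hx₀⟩).ne' hvol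
  have main : ∀ u : Euc N → ℝ, IsTestFun Ω u → u ≠ 0 →
      ((p - 1) / p) ^ p * τ ^ (-p) * ∫ x in Ω, |u x| ^ p
        ≤ ∫ x in Ω, H (gradient u x) ^ p := by
    intro u hu _
    have hlim : Tendsto (fun δ : ℝ => ((p - 1) / p) ^ p * (τ + δ) ^ (-p) * ∫ x in Ω, |u x| ^ p)
        (𝓝[>] 0) (𝓝 (((p - 1) / p) ^ p * τ ^ (-p) * ∫ x in Ω, |u x| ^ p)) := by
      refine Tendsto.mul_const _ (Tendsto.const_mul _ ?_)
      refine Tendsto.rpow_const ?_ (Or.inl hτ.ne')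
      have h : Tendsto (fun δ : ℝ => τ + δ) (𝓝 0) (𝓝 (τ + 0)) :=
        (continuous_const.add continuous_id).tendsto 0
      rw [add_zero] at h
      exact h.mono_left nhdsWithin_le_nhds
    refine le_of_tendsto hlim ?_
    filter_upwards [self_mem_nhdsWithin] with δ hδ
    exact finsler_hardy_shifted hH hp hΩopen hΩbdd hd0 hK heik hsuper hle hδ hu
  refine ⟨main, le_csInf ?_ ?_⟩
  · obtain ⟨x₀, hx₀⟩ := hΩconn.nonempty
    obtain ⟨f, h1, h2, h3, -, h5⟩ := exists_contDiff_tsupport_subset (n := ⊤)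
      (hΩopen.mem_nhds hx₀)
    refine ⟨_, f, ⟨h3, h2, h1⟩, fun h => ?_, rfl⟩
    rw [h] at h5
    norm_num at h5
  · rintro r ⟨u, hu, hu0, rfl⟩
    rw [le_div_iff₀ (integral_mass_pos hp hu hu0), one_div, Real.inv_rpow hτ.le,
      ← Real.rpow_neg hτ.le]
    exact main u hu hu0
end
end
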